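/- (Uniqueness for the inverse discrete transmission eigenvalue problem.) Let (α_1,…,α_l, β_1,…,β_l) and (α̃_1,…,α̃_l, β̃_1,…,β̃_l) be two coefficient systems with all α_n ≠ 0, α̃_n ≠ 0, α_l = α̃_l ≠ α•_l, combined with the same data α•_1,…,α•_l, β•_1,…,β•_l. If the corresponding characteristic polynomials D and D̃ have the same zeros with the same multiplicities (equivalently, D̃ = c·D for some nonzero constant c), then α_n = α̃_n for n = 1,…,l−1 and β_n = β̃_n for n = 1,…,l. -/

import Mathlib

open Polynomial

/-!
Write `u = φ̃ l - c φ l` and `v = φ̃ (l+1) - c φ (l+1)`, so that `D̃ = c D` reads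
`u φ• (l+1) = v φ• l`. Up to a nonzero constant, consecutive terms of `φ•` satisfy a Bézout
identity, hence `(u, v)` is, up to such a constant, a polynomial multiple of
`(φ• l, φ• (l+1))`, and even a constant multiple because of the degree of `u`. The leading
coefficients of `u` and `v` have ratio `α l`, those of `φ• l` and `φ• (l+1)` have ratio `α• l`;
as these differ, `u = v = 0`. Hence the last two terms of `φ̃` are `c` times those of `φ`, and
running the recurrence downwards recovers the coefficients one index at a time.
-/

section JacobiSolution

variable {R : Type*} [CommRing R]

/-- The sequence `φ` solves the three-term recurrence
`α n φ (n+1) + β n φ n + α n φ (n-1) = X φ n` for `1 ≤ n ≤ l` with `φ 0 = 0` and `φ 1 = 1`;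
`β` and `α` are the diagonal and off-diagonal entries of a Jacobi matrix. The index is shifted
by one to avoid truncated subtraction. -/
structure IsJacobiSolution (l : ℕ) (α β : ℕ → R) (φ : ℕ → R[X]) : Prop where
  zero : φ 0 = 0
  one : φ 1 = 1
  recurrence : ∀ n < l, C (α (n + 1)) * φ (n + 2) + C (β (n + 1)) * φ (n + 1)
    + C (α (n + 1)) * φ n = X * φ (n + 1)

/-- The characteristic polynomial `D` of the discrete transmission eigenvalue problem with
solution `φ` and comparison solution `φs` (the paper's `φ•`). -/
noncomputable def transmissionCharpoly (l : ℕ) (φ φs : ℕ → R[X]) : R[X] :=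
  φ l * φs (l + 1) - φ (l + 1) * φs l

namespace IsJacobiSolution

variable {l n : ℕ} {α β α' β' : ℕ → R} {φ φ' : ℕ → R[X]}

theorem of_succ (h : IsJacobiSolution (l + 1) α β φ) : IsJacobiSolution l α β φ :=
  ⟨h.zero, h.one, fun n hn => h.recurrence n (hn.trans l.lt_succ_self)⟩

variable [IsDomain R]

theorem degree_lt_and_degree_succ (h : IsJacobiSolution l α β φ) (hn : n ≤ l) :
    (φ n).degree < n ∧ (φ (n + 1)).degree = n := by
  induction n with
  | zero => simp [h.zero, h.one]
  | succ n ih =>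
    obtain ⟨hlt, heq⟩ := ih (by omega)
    have hcast : (n : WithBot ℕ) < (n + 1 : ℕ) := by exact_mod_cast n.lt_succ_self
    have hsolve : C (α (n + 1)) * φ (n + 2)
        = (X - C (β (n + 1))) * φ (n + 1) - C (α (n + 1)) * φ n := by
      linear_combination h.recurrence n hn
    have hmain : ((X - C (β (n + 1))) * φ (n + 1)).degree = ((n + 1 : ℕ) : WithBot ℕ) := by
      rw [degree_mul, degree_X_sub_C, heq, add_comm, Nat.cast_add_one]
    have hlower : (C (α (n + 1)) * φ n).degree < ((n + 1 : ℕ) : WithBot ℕ) :=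
      (C_mul' _ (φ n) ▸ degree_smul_le _ _).trans_lt (hlt.trans hcast)
    have hdeg : (C (α (n + 1)) * φ (n + 2)).degree = ((n + 1 : ℕ) : WithBot ℕ) := by
      rw [hsolve, degree_sub_eq_left_of_degree_lt (hlower.trans_eq hmain.symm), hmain]
    have hα : α (n + 1) ≠ 0 := by
      intro h0
      rw [h0, C_0, zero_mul, degree_zero] at hdeg
      exact WithBot.bot_ne_coe hdeg
    exact ⟨heq ▸ hcast, by rwa [degree_C_mul hα] at hdeg⟩

theorem degree_lt (h : IsJacobiSolution l α β φ) (hn : n ≤ l) : (φ n).degree < n :=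
  (h.degree_lt_and_degree_succ hn).1

theorem degree_succ (h : IsJacobiSolution l α β φ) (hn : n ≤ l) : (φ (n + 1)).degree = n :=
  (h.degree_lt_and_degree_succ hn).2

theorem coeff_self (h : IsJacobiSolution l α β φ) (hn : n ≤ l) : (φ n).coeff n = 0 :=
  coeff_eq_zero_of_degree_lt (h.degree_lt hn)

theorem coeff_succ_ne_zero (h : IsJacobiSolution l α β φ) (hn : n ≤ l) :
    (φ (n + 1)).coeff n ≠ 0 :=
  coeff_ne_zero_of_eq_degree (h.degree_succ hn)

theorem mul_coeff_succ (h : IsJacobiSolution l α β φ) (hn : n < l) :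
    α (n + 1) * (φ (n + 2)).coeff (n + 1) = (φ (n + 1)).coeff n := by
  have hφn : (φ n).coeff (n + 1) = 0 := coeff_eq_zero_of_degree_lt <|
    (h.degree_lt hn.le).trans (by exact_mod_cast n.lt_succ_self)
  simpa only [coeff_add, coeff_C_mul, coeff_X_mul, h.coeff_self hn, hφn, mul_zero, add_zero]
    using congrArg (coeff · (n + 1)) (h.recurrence n hn)

theorem offDiag_ne_zero (h : IsJacobiSolution l α β φ) (hn : n < l) : α (n + 1) ≠ 0 :=
  left_ne_zero_of_mul (h.mul_coeff_succ hn ▸ h.coeff_succ_ne_zero hn.le)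

theorem exists_bezout (h : IsJacobiSolution l α β φ) (hn : n ≤ l) :
    ∃ p q : R[X], ∃ d ≠ 0, p * φ n + q * φ (n + 1) = C d := by
  induction n with
  | zero => exact ⟨0, 1, 1, one_ne_zero, by simp [h.one]⟩
  | succ n ih =>
    obtain ⟨p, q, d, hd, hpq⟩ := ih (by omega)
    refine ⟨p * (X - C (β (n + 1))) + C (α (n + 1)) * q, -p * C (α (n + 1)),
      α (n + 1) * d, mul_ne_zero (h.offDiag_ne_zero hn) hd, ?_⟩
    rw [C_mul]
    linear_combination C (α (n + 1)) * hpq - p * h.recurrence n hn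

theorem eq_zero_of_mul_eq_mul (h : IsJacobiSolution (l + 1) α β φ) {u v : R[X]} {a : R}
    (hu : u.degree ≤ l) (hlead : a * v.coeff (l + 1) = u.coeff l) (ha : a ≠ α (l + 1))
    (huv : u * φ (l + 2) = v * φ (l + 1)) : u = 0 ∧ v = 0 := by
  obtain ⟨p, q, d, hd, hpq⟩ := h.exists_bezout le_rfl
  set w := p * u + q * v
  have hwu : w * φ (l + 1) = C d * u := by linear_combination u * hpq - q * huv
  have hwv : w * φ (l + 2) = C d * v := by linear_combination v * hpq + p * huv
  have hw : w.degree ≤ 0 := by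
    have hdeg := congrArg degree hwu
    rw [degree_mul, degree_C_mul hd, h.degree_succ l.le_succ] at hdeg
    by_contra! hpos
    exact (hdeg ▸ hu).not_gt
      (by simpa using WithBot.add_lt_add_right (WithBot.natCast_ne_bot l) hpos)
  obtain ⟨k, hk⟩ : ∃ k, w = C k := ⟨_, eq_C_of_degree_le_zero hw⟩
  have hku : k * (φ (l + 1)).coeff l = d * u.coeff l := by
    simpa only [hk, coeff_C_mul] using congrArg (coeff · l) hwu
  have hkv : k * (φ (l + 2)).coeff (l + 1) = d * v.coeff (l + 1) := by
    simpa only [hk, coeff_C_mul] using congrArg (coeff · (l + 1)) hwv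
  have hratio : (a - α (l + 1)) * (φ (l + 2)).coeff (l + 1) * k = 0 := by
    linear_combination a * hkv - hku + d * hlead - k * h.mul_coeff_succ l.lt_succ_self
  have hk0 : k = 0 := (mul_eq_zero.mp hratio).resolve_left
    (mul_ne_zero (sub_ne_zero.mpr ha) (h.coeff_succ_ne_zero le_rfl))
  have hCd : C d ≠ 0 := C_ne_zero.mpr hd
  rw [hk, hk0, C_0, zero_mul] at hwu hwv
  exact ⟨(mul_eq_zero.mp hwu.symm).resolve_left hCd, (mul_eq_zero.mp hwv.symm).resolve_left hCd⟩

theorem eq_C_mul_of_charpoly_eq {αs βs : ℕ → R} {φs : ℕ → R[X]} {c : R}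
    (h : IsJacobiSolution (l + 1) α β φ) (h' : IsJacobiSolution (l + 1) α' β' φ')
    (hs : IsJacobiSolution (l + 1) αs βs φs)
    (hα : α (l + 1) = α' (l + 1)) (hαs : α (l + 1) ≠ αs (l + 1))
    (hD : transmissionCharpoly (l + 1) φ' φs = C c * transmissionCharpoly (l + 1) φ φs) :
    φ' (l + 1) = C c * φ (l + 1) ∧ φ' (l + 2) = C c * φ (l + 2) := by
  have hdeg : (φ' (l + 1) - C c * φ (l + 1)).degree ≤ l :=
    (degree_sub_le _ _).trans <| max_le (h'.degree_succ l.le_succ).le <|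
      (C_mul' c (φ (l + 1)) ▸ degree_smul_le _ _).trans (h.degree_succ l.le_succ).le
  have hlead : α (l + 1) * (φ' (l + 2) - C c * φ (l + 2)).coeff (l + 1)
      = (φ' (l + 1) - C c * φ (l + 1)).coeff l := by
    simp only [coeff_sub, coeff_C_mul]
    linear_combination (φ' (l + 2)).coeff (l + 1) * hα + h'.mul_coeff_succ l.lt_succ_self
      - c * h.mul_coeff_succ l.lt_succ_self
  have hprop : (φ' (l + 1) - C c * φ (l + 1)) * φs (l + 2)
      = (φ' (l + 2) - C c * φ (l + 2)) * φs (l + 1) := by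
    unfold transmissionCharpoly at hD
    linear_combination hD
  exact (hs.eq_zero_of_mul_eq_mul hdeg hlead hαs hprop).imp sub_eq_zero.mp sub_eq_zero.mp

theorem ne_zero_of_eq_C_mul {c : R} (h' : IsJacobiSolution l α' β' φ') (hn : n ≤ l)
    (hφ : φ' (n + 1) = C c * φ (n + 1)) : c ≠ 0 := by
  rintro rfl
  exact h'.coeff_succ_ne_zero hn (by simp [hφ])

theorem offDiag_eq_of_eq_C_mul {c : R}
    (h : IsJacobiSolution (l + 1) α β φ) (h' : IsJacobiSolution (l + 1) α' β' φ')
    (hφ : φ' (l + 1) = C c * φ (l + 1)) (hφ_succ : φ' (l + 2) = C c * φ (l + 2)) :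
    α (l + 1) = α' (l + 1) := by
  have hc : c ≠ 0 := h'.ne_zero_of_eq_C_mul l.le_succ hφ
  have hlead' := h'.mul_coeff_succ l.lt_succ_self
  rw [hφ, hφ_succ, coeff_C_mul, coeff_C_mul] at hlead'
  refine mul_right_cancel₀ (mul_ne_zero hc (h.coeff_succ_ne_zero le_rfl)) ?_
  linear_combination c * h.mul_coeff_succ l.lt_succ_self - hlead'

theorem diag_eq_of_eq_C_mul {c : R}
    (h : IsJacobiSolution (l + 1) α β φ) (h' : IsJacobiSolution (l + 1) α' β' φ')
    (hφ : φ' (l + 1) = C c * φ (l + 1)) (hφ_succ : φ' (l + 2) = C c * φ (l + 2)) :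
    β (l + 1) = β' (l + 1) := by
  have hα := h.offDiag_eq_of_eq_C_mul h' hφ hφ_succ
  have hc : c ≠ 0 := h'.ne_zero_of_eq_C_mul l.le_succ hφ
  have hdiff : C (c * (β' (l + 1) - β (l + 1))) * φ (l + 1)
      + C (α (l + 1)) * (φ' l - C c * φ l) = 0 := by
    have hrec' := h'.recurrence l l.lt_succ_self
    rw [← hα, hφ, hφ_succ] at hrec'
    rw [C_mul, C_sub]
    linear_combination hrec' - C c * h.recurrence l l.lt_succ_self
  have hcoeff : c * (β' (l + 1) - β (l + 1)) * (φ (l + 1)).coeff l = 0 := by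
    simpa only [coeff_add, coeff_C_mul, coeff_sub, h.coeff_self l.le_succ,
      h'.coeff_self l.le_succ, mul_zero, sub_zero, add_zero, coeff_zero]
      using congrArg (coeff · l) hdiff
  have hmul := (mul_eq_zero.mp hcoeff).resolve_right (h.coeff_succ_ne_zero l.le_succ)
  exact (sub_eq_zero.mp ((mul_eq_zero.mp hmul).resolve_left hc)).symm

theorem eq_C_mul_pred_of_eq_C_mul {c : R}
    (h : IsJacobiSolution (l + 1) α β φ) (h' : IsJacobiSolution (l + 1) α' β' φ')
    (hφ : φ' (l + 1) = C c * φ (l + 1)) (hφ_succ : φ' (l + 2) = C c * φ (l + 2)) :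
    φ' l = C c * φ l := by
  have hrec' := h'.recurrence l l.lt_succ_self
  rw [← h.offDiag_eq_of_eq_C_mul h' hφ hφ_succ, ← h.diag_eq_of_eq_C_mul h' hφ hφ_succ,
    hφ, hφ_succ] at hrec'
  refine mul_left_cancel₀ (C_ne_zero.mpr (h.offDiag_ne_zero l.lt_succ_self)) ?_
  linear_combination hrec' - C c * h.recurrence l l.lt_succ_self

theorem coefficients_eq_of_eq_C_mul {c : R}
    (h : IsJacobiSolution l α β φ) (h' : IsJacobiSolution l α' β' φ')
    (hφ : φ' l = C c * φ l) (hφ_succ : φ' (l + 1) = C c * φ (l + 1)) :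
    ∀ n, 1 ≤ n → n ≤ l → α n = α' n ∧ β n = β' n := by
  induction l with
  | zero => intro n h1 h0; omega
  | succ l ih =>
    have hφ_pred := h.eq_C_mul_pred_of_eq_C_mul h' hφ hφ_succ
    intro n h1 hn
    obtain hlt | rfl := hn.lt_or_eq
    · exact ih h.of_succ h'.of_succ hφ_pred hφ n h1 (by omega)
    · exact ⟨h.offDiag_eq_of_eq_C_mul h' hφ hφ_succ, h.diag_eq_of_eq_C_mul h' hφ hφ_succ⟩

end IsJacobiSolution

theorem transmission_inverse_problem_uniqueness_general [IsDomain R] {l : ℕ}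
    {α β α' β' αs βs : ℕ → R} {φ φ' φs : ℕ → R[X]} {c : R}
    (h : IsJacobiSolution l α β φ) (h' : IsJacobiSolution l α' β' φ')
    (hs : IsJacobiSolution l αs βs φs) (hα : α l = α' l) (hαs : α l ≠ αs l)
    (hD : transmissionCharpoly l φ' φs = C c * transmissionCharpoly l φ φs) :
    ∀ n, 1 ≤ n → n ≤ l → α n = α' n ∧ β n = β' n := by
  cases l with
  | zero => intro n h1 h0; omega
  | succ l =>
    obtain ⟨hφ, hφ_succ⟩ := h.eq_C_mul_of_charpoly_eq h' hs hα hαs hD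
    exact h.coefficients_eq_of_eq_C_mul h' hφ hφ_succ

end JacobiSolution

/-- Uniqueness for the inverse discrete transmission eigenvalue problem: two coefficient
systems `(α, β)` and `(α̃, β̃)` with all `α n ≠ 0`, `α̃ n ≠ 0`, `α l = α̃ l ≠ α• l`, combined
with the same data `(α•, β•)`, whose characteristic polynomials `D`, `D̃` have the same zeros
with the same multiplicities (i.e. `D̃ = c D` with `c ≠ 0`), coincide: `α n = α̃ n` for
`n = 1,…,l-1` and `β n = β̃ n` for `n = 1,…,l`. -/
theorem transmission_inverse_problem_uniqueness (l : ℕ) (hl : 1 ≤ l)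
    (αs βs : ℕ → ℂ) (hαs : ∀ n, 1 ≤ n → n ≤ l → αs n ≠ 0)
    (α β α' β' : ℕ → ℂ)
    (hα : ∀ n, 1 ≤ n → n ≤ l → α n ≠ 0)
    (hα' : ∀ n, 1 ≤ n → n ≤ l → α' n ≠ 0)
    (hαl : α l = α' l) (hαlne : α l ≠ αs l)
    (φ φ' φs : ℕ → Polynomial ℂ)
    (hφ0 : φ 0 = 0) (hφ1 : φ 1 = 1) (hφ'0 : φ' 0 = 0) (hφ'1 : φ' 1 = 1)
    (hφs0 : φs 0 = 0) (hφs1 : φs 1 = 1)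
    (hrec : ∀ n, 1 ≤ n → n ≤ l →
      C (α n) * φ (n + 1) + C (β n) * φ n + C (α n) * φ (n - 1) = X * φ n)
    (hrec' : ∀ n, 1 ≤ n → n ≤ l →
      C (α' n) * φ' (n + 1) + C (β' n) * φ' n + C (α' n) * φ' (n - 1) = X * φ' n)
    (hrecs : ∀ n, 1 ≤ n → n ≤ l →
      C (αs n) * φs (n + 1) + C (βs n) * φs n + C (αs n) * φs (n - 1) = X * φs n)
    (c : ℂ) (hc : c ≠ 0)
    (hDD : φ' l * φs (l + 1) - φ' (l + 1) * φs l
      = C c * (φ l * φs (l + 1) - φ (l + 1) * φs l)) :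
    (∀ n, 1 ≤ n → n ≤ l - 1 → α n = α' n) ∧ (∀ n, 1 ≤ n → n ≤ l → β n = β' n) := by
  have h := transmission_inverse_problem_uniqueness_general
    ⟨hφ0, hφ1, fun n hn => hrec (n + 1) n.succ_pos hn⟩
    ⟨hφ'0, hφ'1, fun n hn => hrec' (n + 1) n.succ_pos hn⟩
    ⟨hφs0, hφs1, fun n hn => hrecs (n + 1) n.succ_pos hn⟩ hαl hαlne hDD
  exact ⟨fun n h1 hn => (h n h1 (by omega)).1, fun n h1 hn => (h n h1 hn).2⟩
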